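/- Let q ∈ ℂ with 0 < |q| < 1 and let a₁, a₂, b₁, x ∈ ℂ satisfy: a₁ ≠ 0, a₂ ≠ 0, b₁ ≠ 0; a₁ ∉ {q^m : m ≥ 1} and a₂ ∉ {q^m : m ≥ 1} (so that (q/a₁;q)_n ≠ 0 and (q/a₂;q)_n ≠ 0 for all n); b₁/a₁ ∉ {q^m : m ∈ ℤ} (so that (b₁ q^{-n}/a₁;q)_k ≠ 0 for all n, k); and x ≠ q^{-m} for every m ∈ ℕ (so that (x;q)_n ≠ 0 for all n). Assume both series below converge absolutely. Then ∑_{n≥0} [q^{n^2} (a₁ q/b₁;q)_n / ((q;q)_n (q/a₁;q)_n (q/a₂;q)_n)] (x/a₁)^n · ∑_{k=0}^{n} (q^{-n};q)_k (a₂ q^{-n};q)_k (b₁/a₂)^k / ((q;q)_k (b₁ q^{-n}/a₁;q)_k) = (x;q)_∞ · ∑_{n≥0} (-1)^n q^{3n(n-1)/2} (b₁/(a₁ a₂);q)_n (x q^2/b₁)^n / ((q;q)_n (x;q)_n (q/a₁;q)_n (q/a₂;q)_n). -/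

import Mathlib

/-- The finite q-shifted factorial `(a;q)_n = ∏_{k=0}^{n-1} (1 - a q^k)`. -/
noncomputable def qPoch (a q : ℂ) (n : ℕ) : ℂ := ∏ k ∈ Finset.range n, (1 - a * q ^ k)

/-- The infinite q-shifted factorial `(a;q)_∞ = ∏_{k=0}^{∞} (1 - a q^k)`. -/
noncomputable def qPochInf (a q : ℂ) : ℂ := ∏' k : ℕ, (1 - a * q ^ k)

/- Multiplying out `(x;q)_∞ / (x;q)_n = (x q^n;q)_∞` by Euler's expansion turns the right-hand side
into a double series in powers of `x`. Its coefficient of `x^N` is a finite sum, which has to be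
matched with the terminating `₂φ₁` on the left after reversing the order of summation in the latter.
The finite identity follows by expanding `(w;q)_s / (q;q)_s` with a `q`-Vandermonde sum,
interchanging the summations and evaluating the inner one with the `q`-binomial theorem. -/

open Finset Filter Topology

lemma choose_two_succ (n : ℕ) : (n + 1).choose 2 = n.choose 2 + n := by
  rw [Nat.choose_succ_succ' n 1, Nat.choose_one_right, add_comm]

lemma choose_two_add (m n : ℕ) : (m + n).choose 2 = m.choose 2 + n.choose 2 + m * n := by
  induction n with
  | zero => simp
  | succ n ih => rw [← add_assoc, choose_two_succ, ih, choose_two_succ]; ring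

lemma two_mul_choose_two_add_self (n : ℕ) : 2 * n.choose 2 + n = n ^ 2 := by
  induction n with
  | zero => simp
  | succ n ih => rw [choose_two_succ]; linarith

lemma sum_antidiagonal_antidiagonal_assoc {A M : Type*} [AddMonoid A] [HasAntidiagonal A]
    [AddCommMonoid M] (f : A → A → A → M) (N : A) :
    ∑ p ∈ antidiagonal N, ∑ r ∈ antidiagonal p.1, f r.1 r.2 p.2 =
      ∑ p ∈ antidiagonal N, ∑ r ∈ antidiagonal p.2, f p.1 r.1 r.2 := by
  rw [sum_sigma', sum_sigma']
  refine sum_nbij' (fun s => ⟨(s.2.1, s.2.2 + s.1.2), (s.2.2, s.1.2)⟩)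
    (fun s => ⟨(s.1.1 + s.2.1, s.2.2), (s.1.1, s.2.1)⟩) ?_ ?_ ?_ ?_ fun _ _ => rfl
  all_goals
    rintro ⟨⟨a, b⟩, ⟨c, d⟩⟩ h
    obtain ⟨rfl, rfl⟩ := by
      simpa only [mem_sigma, HasAntidiagonal.mem_antidiagonal] using h
    simp [add_assoc]

lemma tsum_tsum_eq_tsum_sum_antidiagonal {A α : Type*} [AddCommMonoid A] [HasAntidiagonal A]
    [AddCommGroup α] [UniformSpace α] [IsUniformAddGroup α] [CompleteSpace α] [T0Space α]
    {f : A × A → α} (hf : Summable f) :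
    ∑' n, ∑' m, f (n, m) = ∑' N, ∑ p ∈ antidiagonal N, f p := by
  have hσ := HasAntidiagonal.sigmaAntidiagonalEquivProd.summable_iff.mpr hf
  rw [← hf.tsum_prod, ← HasAntidiagonal.sigmaAntidiagonalEquivProd.tsum_eq f]
  refine (hσ.tsum_sigma' fun N => (hasSum_fintype _).summable).trans ?_
  refine tsum_congr fun N => ?_
  rw [tsum_fintype]
  exact sum_finset_coe f (antidiagonal N)

lemma summable_norm_of_succ_eq_mul {R : Type*} [SeminormedRing R] {f r : ℕ → R}
    (hr : Tendsto r atTop (𝓝 0)) (hf : ∀ n, f (n + 1) = r n * f n) :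
    Summable fun n => ‖f n‖ := by
  refine summable_of_ratio_norm_eventually_le (r := 1 / 2) (by norm_num) ?_
  filter_upwards [hr.norm.eventually_le_const (u := 1 / 2) (by norm_num)] with n hn
  rw [norm_norm, norm_norm, hf]
  exact (norm_mul_le _ _).trans (mul_le_mul_of_nonneg_right hn (norm_nonneg _))

section FiniteProducts

variable {q : ℂ}

lemma qPoch_zero (a q : ℂ) : qPoch a q 0 = 1 := prod_range_zero _

lemma qPoch_succ (a q : ℂ) (n : ℕ) : qPoch a q (n + 1) = qPoch a q n * (1 - a * q ^ n) :=
  prod_range_succ _ _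

lemma qPoch_succ' (a q : ℂ) (n : ℕ) : qPoch a q (n + 1) = (1 - a) * qPoch (a * q) q n := by
  simp only [qPoch, prod_range_succ', pow_zero, mul_one, pow_succ', mul_assoc, mul_comm (1 - a)]

lemma qPoch_add (a q : ℂ) (m n : ℕ) :
    qPoch a q (m + n) = qPoch a q m * qPoch (a * q ^ m) q n := by
  simp only [qPoch, prod_range_add, pow_add, mul_assoc]

lemma qPoch_zero_left (q : ℂ) (n : ℕ) : qPoch 0 q n = 1 := by simp [qPoch]

lemma qPoch_ne_zero {a : ℂ} (h : ∀ k : ℕ, a * q ^ k ≠ 1) (n : ℕ) : qPoch a q n ≠ 0 :=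
  prod_ne_zero_iff.mpr fun k _ => sub_ne_zero.mpr (h k).symm

lemma qPoch_div_ne_zero {a : ℂ} (ha : a ≠ 0) (h : ∀ m : ℕ, 1 ≤ m → a ≠ q ^ m) (n : ℕ) :
    qPoch (q / a) q n ≠ 0 := by
  refine qPoch_ne_zero (fun k hk => h (k + 1) k.succ_pos ?_) n
  rw [pow_succ', ← one_mul a, ← eq_div_iff ha, ← div_mul_eq_mul_div, hk]

lemma one_sub_pow_succ_ne_zero (hq : ∀ n, qPoch q q n ≠ 0) (n : ℕ) : 1 - q ^ (n + 1) ≠ 0 := by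
  rw [pow_succ']
  exact right_ne_zero_of_mul (qPoch_succ q q n ▸ hq (n + 1))

lemma qPoch_mul_zpow_neg {a : ℂ} (hq : q ≠ 0) (ha : a ≠ 0) (m k : ℕ)
    (hm : qPoch (q / a) q m ≠ 0) :
    qPoch (a * q ^ (-((m + k : ℕ) : ℤ))) q k =
      qPoch (q / a) q (m + k) * (-a) ^ k /
        (qPoch (q / a) q m * q ^ ((k + 1).choose 2 + k * m)) := by
  rw [eq_div_iff (mul_ne_zero hm (pow_ne_zero _ hq))]
  induction k with
  | zero => simp [qPoch_zero]
  | succ k ih =>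
    have hshift : a * q ^ (-((m + (k + 1) : ℕ) : ℤ)) * q = a * q ^ (-((m + k : ℕ) : ℤ)) := by
      rw [mul_assoc, ← zpow_add_one₀ hq]
      push_cast
      ring_nf
    have hfactor : (1 - a * q ^ (-((m + (k + 1) : ℕ) : ℤ))) * q ^ (k + 1 + m) =
        -a * (1 - q / a * q ^ (m + k)) := by
      rw [zpow_neg, zpow_natCast]
      field_simp
      ring
    rw [qPoch_succ', hshift, ← add_assoc m, qPoch_succ, choose_two_succ (k + 1)]
    linear_combination (-a * (1 - q / a * q ^ (m + k))) * ih +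
      qPoch (a * q ^ (-((m + k : ℕ) : ℤ))) q k * qPoch (q / a) q m *
        q ^ ((k + 1).choose 2 + k * m) * hfactor

end FiniteProducts

section FiniteSums

variable {q : ℂ}

lemma sum_antidiagonal_succ_div_qPoch (hq : ∀ n, qPoch q q n ≠ 0) (g : ℕ → ℕ → ℂ) (n : ℕ) :
    (1 - q ^ (n + 1)) *
        ∑ p ∈ antidiagonal (n + 1), g p.1 p.2 / (qPoch q q p.1 * qPoch q q p.2) =
      ∑ p ∈ antidiagonal n, (q ^ p.1 * g p.1 (p.2 + 1) + g (p.1 + 1) p.2) /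
        (qPoch q q p.1 * qPoch q q p.2) := by
  have hsplit : (1 - q ^ (n + 1)) *
        ∑ p ∈ antidiagonal (n + 1), g p.1 p.2 / (qPoch q q p.1 * qPoch q q p.2) =
      ∑ p ∈ antidiagonal (n + 1),
          q ^ p.1 * (1 - q ^ p.2) * g p.1 p.2 / (qPoch q q p.1 * qPoch q q p.2) +
        ∑ p ∈ antidiagonal (n + 1),
          (1 - q ^ p.1) * g p.1 p.2 / (qPoch q q p.1 * qPoch q q p.2) := by
    rw [mul_sum, ← sum_add_distrib]
    refine sum_congr rfl fun p hp => ?_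
    rw [← HasAntidiagonal.mem_antidiagonal.mp hp, pow_add]
    ring
  rw [hsplit, Nat.sum_antidiagonal_succ', Nat.sum_antidiagonal_succ]
  simp only [pow_zero, sub_self, mul_zero, zero_mul, zero_div, zero_add]
  rw [← sum_add_distrib]
  refine sum_congr rfl fun p _ => ?_
  have h₃ := one_sub_pow_succ_ne_zero hq p.1
  have h₄ := one_sub_pow_succ_ne_zero hq p.2
  rw [qPoch_succ q q p.1, qPoch_succ q q p.2, ← pow_succ', ← pow_succ']
  field_simp

lemma sum_antidiagonal_qVandermonde (hq : ∀ n, qPoch q q n ≠ 0) (c w : ℂ) (n : ℕ) :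
    ∑ p ∈ antidiagonal n, (-1) ^ p.1 * q ^ p.1.choose 2 * w ^ p.1 * qPoch c q p.1 *
        qPoch (c * w * q ^ p.1) q p.2 / (qPoch q q p.1 * qPoch q q p.2) =
      qPoch w q n / qPoch q q n := by
  induction n generalizing w with
  | zero => simp [qPoch_zero]
  | succ n ih =>
    have hn := one_sub_pow_succ_ne_zero hq n
    have hstep : (1 - q ^ (n + 1)) * (qPoch w q (n + 1) / qPoch q q (n + 1)) =
        (1 - w) * (qPoch (w * q) q n / qPoch q q n) := by
      rw [qPoch_succ' w, qPoch_succ q, ← pow_succ']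
      field_simp
    apply mul_left_cancel₀ hn
    rw [sum_antidiagonal_succ_div_qPoch hq (fun i j => (-1) ^ i * q ^ i.choose 2 * w ^ i *
      qPoch c q i * qPoch (c * w * q ^ i) q j), hstep, ← ih (w * q), mul_sum]
    refine sum_congr rfl fun p _ => ?_
    have hshift : c * (w * q) * q ^ p.1 = c * w * q ^ p.1 * q := by ring
    rw [choose_two_succ, qPoch_succ c, hshift, pow_succ q,
      ← mul_assoc (c * w), qPoch_succ' (c * w * q ^ p.1)]
    ring

lemma sum_antidiagonal_qBinomial (hq : ∀ n, qPoch q q n ≠ 0) (w : ℂ) (n : ℕ) :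
    ∑ p ∈ antidiagonal n, (-1) ^ p.1 * q ^ p.1.choose 2 * w ^ p.1 /
        (qPoch q q p.1 * qPoch q q p.2) = qPoch w q n / qPoch q q n := by
  simpa only [zero_mul, qPoch_zero_left, mul_one] using sum_antidiagonal_qVandermonde hq 0 w n

lemma qPoch_div_qPoch_eq_sum_antidiagonal (hq : ∀ n, qPoch q q n ≠ 0) {c w : ℂ}
    (hv : ∀ n, qPoch (c * w) q n ≠ 0) (u : ℂ) (s : ℕ) :
    qPoch w q s * (-u) ^ s * q ^ s.choose 2 / (qPoch q q s * qPoch (c * w) q s) =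
      ∑ r ∈ antidiagonal s,
        q ^ (2 * r.1.choose 2) * qPoch c q r.1 * (w * u) ^ r.1 /
            (qPoch q q r.1 * qPoch (c * w) q r.1) *
          ((-1) ^ r.2 * q ^ r.2.choose 2 * (u * q ^ r.1) ^ r.2 / qPoch q q r.2) := by
  rw [mul_assoc, mul_div_mul_comm, ← sum_antidiagonal_qVandermonde hq c w s, sum_mul]
  refine sum_congr rfl ?_
  rintro ⟨i, j⟩ hij
  obtain rfl : i + j = s := HasAntidiagonal.mem_antidiagonal.mp hij
  have hv' := hv (i + j)
  rw [qPoch_add] at hv' ⊢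
  have h₁ := left_ne_zero_of_mul hv'
  have h₂ := right_ne_zero_of_mul hv'
  rw [choose_two_add, neg_pow u]
  have hsign : (-1 : ℂ) ^ (2 * i) = 1 := (even_two_mul i).neg_one_pow
  field_simp
  linear_combination q ^ (2 * i.choose 2) * qPoch c q i * (w * u) ^ i * (-1) ^ j *
    q ^ j.choose 2 * (q ^ i * u) ^ j / (qPoch q q i * qPoch q q j) * hsign

lemma sum_antidiagonal_transformation (hq : ∀ n, qPoch q q n ≠ 0) {c u w : ℂ}
    (hu : ∀ n, qPoch u q n ≠ 0) (hv : ∀ n, qPoch (c * w) q n ≠ 0) (N : ℕ) :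
    ∑ p ∈ antidiagonal N, qPoch w q p.1 * (-u) ^ p.1 * q ^ p.1.choose 2 /
        (qPoch q q p.1 * qPoch (c * w) q p.1 * qPoch q q p.2) =
      qPoch u q N * ∑ p ∈ antidiagonal N, q ^ (2 * p.1.choose 2) * qPoch c q p.1 *
        (w * u) ^ p.1 /
          (qPoch q q p.1 * qPoch u q p.1 * qPoch (c * w) q p.1 * qPoch q q p.2) := by
  simp only [← div_div _ (_ * _) (qPoch q q _), qPoch_div_qPoch_eq_sum_antidiagonal hq hv u,
    sum_div]
  rw [sum_antidiagonal_antidiagonal_assoc fun i j k =>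
    q ^ (2 * i.choose 2) * qPoch c q i * (w * u) ^ i / (qPoch q q i * qPoch (c * w) q i) *
      ((-1) ^ j * q ^ j.choose 2 * (u * q ^ i) ^ j / qPoch q q j) / qPoch q q k, mul_sum]
  refine sum_congr rfl ?_
  rintro ⟨i, m⟩ him
  obtain rfl : i + m = N := HasAntidiagonal.mem_antidiagonal.mp him
  simp only [mul_div_assoc (_ / _), div_div, ← mul_sum]
  rw [sum_antidiagonal_qBinomial hq, qPoch_add]
  have := hu i
  field_simp

end FiniteSums

section TerminatingSeries

/-- The `n`-th term of the series `₁φ₃(c; x, u, v; q, z)` multiplied by `(x;q)_n`. Leaving `(x;q)_n`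
out of the denominator lets it be absorbed into `(x;q)_∞`. -/
noncomputable def phiOneThreeCoeff (c u v q z : ℂ) (n : ℕ) : ℂ :=
  (-1) ^ n * q ^ (3 * n.choose 2) * qPoch c q n * z ^ n /
    (qPoch q q n * qPoch u q n * qPoch v q n)

/-- The coefficient of `y^m` in Euler's expansion of `(y;q)_∞`. -/
noncomputable def eulerCoeff (q : ℂ) (m : ℕ) : ℂ := (-1) ^ m * q ^ m.choose 2 / qPoch q q m

variable {q a₁ a₂ b₁ : ℂ}

lemma terminating_term_reversal (hq0 : q ≠ 0) (hq : ∀ n, qPoch q q n ≠ 0) (ha₁ : a₁ ≠ 0)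
    (ha₂ : a₂ ≠ 0) (hb₁ : b₁ ≠ 0) (hv : ∀ n, qPoch (q / a₂) q n ≠ 0)
    (hw : ∀ n, qPoch (a₁ * q / b₁) q n ≠ 0) (m k : ℕ) :
    q ^ ((m + k) ^ 2) * qPoch (a₁ * q / b₁) q (m + k) /
        (qPoch q q (m + k) * qPoch (q / a₂) q (m + k)) * (1 / a₁) ^ (m + k) *
      (qPoch (q ^ (-((m + k : ℕ) : ℤ))) q k * qPoch (a₂ * q ^ (-((m + k : ℕ) : ℤ))) q k *
        (b₁ / a₂) ^ k / (qPoch q q k * qPoch (b₁ * q ^ (-((m + k : ℕ) : ℤ)) / a₁) q k)) =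
    (-1) ^ (m + k) * q ^ (m + k).choose 2 *
      (qPoch (a₁ * q / b₁) q m * (-(q / a₁)) ^ m * q ^ m.choose 2 /
        (qPoch q q m * qPoch (q / a₂) q m * qPoch q q k)) := by
  have hw_eq : q / (b₁ / a₁) = a₁ * q / b₁ := by rw [div_div_eq_mul_div, mul_comm]
  have hone := qPoch_mul_zpow_neg hq0 one_ne_zero m k (by simpa only [div_one] using hq m)
  have ha := qPoch_mul_zpow_neg hq0 ha₂ m k (hv m)
  have hb := qPoch_mul_zpow_neg hq0 (div_ne_zero hb₁ ha₁) m k (hw_eq ▸ hw m)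
  rw [one_mul, div_one] at hone
  rw [hw_eq, div_mul_eq_mul_div] at hb
  have hpow : q ^ ((m + k) ^ 2) = q ^ (m + k).choose 2 * q ^ m.choose 2 * q ^ m *
      q ^ ((k + 1).choose 2 + k * m) := by
    simp only [← pow_add]
    congr 1
    rw [← two_mul_choose_two_add_self, choose_two_add, choose_two_succ]
    ring
  have hqN := hq (m + k)
  have hqm := hq m
  have hvN := hv (m + k)
  have hvm := hv m
  have hwN := hw (m + k)
  have hwm := hw m
  have hqk := hq k
  have hsign : (-1 : ℂ) ^ (2 * m) = 1 := (even_two_mul m).neg_one_pow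
  rw [hone, ha, hb, hpow, neg_pow a₂, neg_pow (b₁ / a₁), neg_pow (q / a₁), pow_add (-1)]
  simp only [div_pow]
  field_simp
  linear_combination -a₁ ^ (m + k) * hsign

lemma terminating_sum_eq_sum_antidiagonal (hq0 : q ≠ 0) (hq : ∀ n, qPoch q q n ≠ 0)
    (ha₁ : a₁ ≠ 0) (ha₂ : a₂ ≠ 0) (hb₁ : b₁ ≠ 0) (hv : ∀ n, qPoch (q / a₂) q n ≠ 0)
    (hw : ∀ n, qPoch (a₁ * q / b₁) q n ≠ 0) (N : ℕ) :
    q ^ (N ^ 2) * qPoch (a₁ * q / b₁) q N / (qPoch q q N * qPoch (q / a₂) q N) * (1 / a₁) ^ N *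
      ∑ k ∈ range (N + 1),
        qPoch (q ^ (-(N : ℤ))) q k * qPoch (a₂ * q ^ (-(N : ℤ))) q k * (b₁ / a₂) ^ k /
          (qPoch q q k * qPoch (b₁ * q ^ (-(N : ℤ)) / a₁) q k) =
    (-1) ^ N * q ^ N.choose 2 *
      ∑ p ∈ antidiagonal N, qPoch (a₁ * q / b₁) q p.1 * (-(q / a₁)) ^ p.1 * q ^ p.1.choose 2 /
        (qPoch q q p.1 * qPoch (q / a₂) q p.1 * qPoch q q p.2) := by
  rw [← Nat.sum_antidiagonal_eq_sum_range_succ_mk (fun p : ℕ × ℕ =>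
      qPoch (q ^ (-(N : ℤ))) q p.1 * qPoch (a₂ * q ^ (-(N : ℤ))) q p.1 * (b₁ / a₂) ^ p.1 /
        (qPoch q q p.1 * qPoch (b₁ * q ^ (-(N : ℤ)) / a₁) q p.1)),
    ← Nat.sum_antidiagonal_swap, mul_sum, mul_sum]
  refine sum_congr rfl ?_
  rintro ⟨m, k⟩ hmk
  obtain rfl : m + k = N := HasAntidiagonal.mem_antidiagonal.mp hmk
  exact terminating_term_reversal hq0 hq ha₁ ha₂ hb₁ hv hw m k

lemma terminating_sum_mul_pow_eq_sum_antidiagonal (hq0 : q ≠ 0) (hq : ∀ n, qPoch q q n ≠ 0)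
    (ha₁ : a₁ ≠ 0) (ha₂ : a₂ ≠ 0) (hb₁ : b₁ ≠ 0) (hu : ∀ n, qPoch (q / a₁) q n ≠ 0)
    (hv : ∀ n, qPoch (q / a₂) q n ≠ 0) (hw : ∀ n, qPoch (a₁ * q / b₁) q n ≠ 0) (x : ℂ) (N : ℕ) :
    q ^ (N ^ 2) * qPoch (a₁ * q / b₁) q N /
        (qPoch q q N * qPoch (q / a₁) q N * qPoch (q / a₂) q N) * (x / a₁) ^ N *
      ∑ k ∈ range (N + 1),
        qPoch (q ^ (-(N : ℤ))) q k * qPoch (a₂ * q ^ (-(N : ℤ))) q k * (b₁ / a₂) ^ k /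
          (qPoch q q k * qPoch (b₁ * q ^ (-(N : ℤ)) / a₁) q k) =
    ∑ p ∈ antidiagonal N,
      phiOneThreeCoeff (b₁ / (a₁ * a₂)) (q / a₁) (q / a₂) q (x * q ^ 2 / b₁) p.1 *
        (eulerCoeff q p.2 * (x * q ^ p.1) ^ p.2) := by
  have hv_eq : b₁ / (a₁ * a₂) * (a₁ * q / b₁) = q / a₂ := by field_simp
  have hz_eq : x * q ^ 2 / b₁ = x * (a₁ * q / b₁ * (q / a₁)) := by field_simp
  have hrev := terminating_sum_eq_sum_antidiagonal hq0 hq ha₁ ha₂ hb₁ hv hw N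
  have htrans := sum_antidiagonal_transformation hq hu (hv_eq ▸ hv) N
  rw [hv_eq] at htrans
  rw [htrans] at hrev
  have huN := hu N
  have hterm : ∀ p ∈ antidiagonal N,
      phiOneThreeCoeff (b₁ / (a₁ * a₂)) (q / a₁) (q / a₂) q (x * q ^ 2 / b₁) p.1 *
          (eulerCoeff q p.2 * (x * q ^ p.1) ^ p.2) =
        x ^ N * ((-1) ^ N * q ^ N.choose 2 * (q ^ (2 * p.1.choose 2) *
          qPoch (b₁ / (a₁ * a₂)) q p.1 * (a₁ * q / b₁ * (q / a₁)) ^ p.1 /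
            (qPoch q q p.1 * qPoch (q / a₁) q p.1 * qPoch (q / a₂) q p.1 * qPoch q q p.2))) := by
    rintro ⟨n, m⟩ hnm
    obtain rfl : n + m = N := HasAntidiagonal.mem_antidiagonal.mp hnm
    rw [hz_eq, phiOneThreeCoeff, eulerCoeff, choose_two_add]
    ring
  rw [sum_congr rfl hterm, ← mul_sum, ← mul_sum]
  calc _ = x ^ N / qPoch (q / a₁) q N * _ := by
        rw [div_eq_mul_one_div x, mul_pow]
        ring
    _ = _ := congrArg _ hrev
    _ = _ := by field_simp

end TerminatingSeries

section InfiniteProducts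

variable {q : ℂ}

lemma qPoch_self_ne_zero (hq : ‖q‖ < 1) (n : ℕ) : qPoch q q n ≠ 0 := by
  refine qPoch_ne_zero (fun k hk => ?_) n
  have hlt : ‖q ^ (k + 1)‖ < 1 :=
    norm_pow q (k + 1) ▸ pow_lt_one₀ (norm_nonneg q) hq k.succ_ne_zero
  rw [pow_succ', hk, norm_one] at hlt
  exact lt_irrefl 1 hlt

lemma tendsto_one_sub_mul_pow (hq : ‖q‖ < 1) (a : ℂ) :
    Tendsto (fun n : ℕ => 1 - a * q ^ n) atTop (𝓝 1) := by
  simpa using ((tendsto_pow_atTop_nhds_zero_of_norm_lt_one hq).const_mul a).const_sub 1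

lemma summable_norm_phiOneThreeCoeff (hq : ‖q‖ < 1) (c u v z : ℂ) :
    Summable fun n => ‖phiOneThreeCoeff c u v q z n‖ := by
  have hnum : Tendsto (fun n : ℕ => -z * (q ^ n) ^ 3 * (1 - c * q ^ n)) atTop (𝓝 0) := by
    simpa using (((tendsto_pow_atTop_nhds_zero_of_norm_lt_one hq).pow 3).const_mul (-z)).mul
      (tendsto_one_sub_mul_pow hq c)
  have hden : Tendsto (fun n : ℕ => (1 - q * q ^ n) * (1 - u * q ^ n) * (1 - v * q ^ n)) atTop
      (𝓝 1) := by
    simpa using ((tendsto_one_sub_mul_pow hq q).mul (tendsto_one_sub_mul_pow hq u)).mul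
      (tendsto_one_sub_mul_pow hq v)
  refine summable_norm_of_succ_eq_mul (div_one (0 : ℂ) ▸ hnum.div hden one_ne_zero) fun n => ?_
  simp only [phiOneThreeCoeff, qPoch_succ, choose_two_succ, Pi.div_apply, div_mul_div_comm]
  ring

lemma eulerCoeff_zero (q : ℂ) : eulerCoeff q 0 = 1 := by simp [eulerCoeff, qPoch_zero]

lemma eulerCoeff_succ (q : ℂ) (m : ℕ) :
    eulerCoeff q (m + 1) = -q ^ m / (1 - q * q ^ m) * eulerCoeff q m := by
  simp only [eulerCoeff, qPoch_succ, choose_two_succ, div_mul_div_comm]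
  ring

lemma summable_norm_eulerCoeff_mul_pow (hq : ‖q‖ < 1) (y : ℂ) :
    Summable fun m => ‖eulerCoeff q m * y ^ m‖ := by
  have hratio : Tendsto (fun m : ℕ => -q ^ m / (1 - q * q ^ m) * y) atTop (𝓝 0) := by
    simpa [Pi.div_def] using ((tendsto_pow_atTop_nhds_zero_of_norm_lt_one hq).neg.div
      (tendsto_one_sub_mul_pow hq q) one_ne_zero).mul_const y
  refine summable_norm_of_succ_eq_mul hratio fun m => ?_
  rw [eulerCoeff_succ]
  ring

lemma norm_eulerCoeff_mul_pow_le (hq : ‖q‖ < 1) (y : ℂ) (n m : ℕ) :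
    ‖eulerCoeff q m * (y * q ^ n) ^ m‖ ≤ ‖eulerCoeff q m * y ^ m‖ := by
  rw [mul_pow, ← mul_assoc, norm_mul, norm_pow, norm_pow]
  exact mul_le_of_le_one_right (norm_nonneg _)
    (pow_le_one₀ (by positivity) (pow_le_one₀ (norm_nonneg q) hq.le))

lemma tsum_eulerCoeff_mul_pow_eq_one_sub_mul (hq : ‖q‖ < 1) (y : ℂ) :
    ∑' m, eulerCoeff q m * y ^ m = (1 - y) * ∑' m, eulerCoeff q m * (y * q) ^ m := by
  have hy := (summable_norm_eulerCoeff_mul_pow hq y).of_norm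
  have hyq := (summable_norm_eulerCoeff_mul_pow hq (y * q)).of_norm
  have hcoeff (m : ℕ) : eulerCoeff q (m + 1) * y ^ (m + 1) =
      eulerCoeff q (m + 1) * (y * q) ^ (m + 1) - y * (eulerCoeff q m * (y * q) ^ m) := by
    have := one_sub_pow_succ_ne_zero (qPoch_self_ne_zero hq) m
    rw [eulerCoeff_succ, ← pow_succ']
    field_simp
    ring
  rw [hy.tsum_eq_zero_add, tsum_congr hcoeff,
    ((summable_nat_add_iff 1).mpr hyq).tsum_sub (hyq.mul_left y), tsum_mul_left]
  linear_combination -hyq.tsum_eq_zero_add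

lemma tsum_eulerCoeff_mul_pow_eq_qPoch_mul (hq : ‖q‖ < 1) (y : ℂ) (n : ℕ) :
    ∑' m, eulerCoeff q m * y ^ m = qPoch y q n * ∑' m, eulerCoeff q m * (y * q ^ n) ^ m := by
  induction n with
  | zero => simp [qPoch_zero]
  | succ n ih =>
    rw [ih, tsum_eulerCoeff_mul_pow_eq_one_sub_mul hq, qPoch_succ, pow_succ, mul_assoc, mul_assoc]

lemma tendsto_tsum_eulerCoeff_mul_pow (hq : ‖q‖ < 1) (y : ℂ) :
    Tendsto (fun n : ℕ => ∑' m, eulerCoeff q m * (y * q ^ n) ^ m) atTop (𝓝 1) := by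
  have hzero : ∑' m, eulerCoeff q m * (y * 0) ^ m = 1 := by
    rw [tsum_eq_single 0 fun m hm => by simp [hm], pow_zero, mul_one, eulerCoeff_zero]
  rw [← hzero]
  refine tendsto_tsum_of_dominated_convergence (summable_norm_eulerCoeff_mul_pow hq y)
    (fun m => ?_) (Eventually.of_forall (norm_eulerCoeff_mul_pow_le hq y))
  exact (((tendsto_pow_atTop_nhds_zero_of_norm_lt_one hq).const_mul y).pow m).const_mul _

lemma multipliable_one_sub_mul_pow (hq : ‖q‖ < 1) (a : ℂ) :
    Multipliable fun k : ℕ => 1 - a * q ^ k := by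
  have hsum : Summable fun k : ℕ => ‖-(a * q ^ k)‖ := by
    simpa only [norm_neg, norm_mul] using
      (summable_norm_geometric_of_norm_lt_one hq).mul_left ‖a‖
  simpa only [sub_eq_add_neg] using multipliable_one_add_of_summable hsum

lemma qPochInf_eq_qPoch_mul_qPochInf (hq : ‖q‖ < 1) (a : ℂ) (n : ℕ) :
    qPochInf a q = qPoch a q n * qPochInf (a * q ^ n) q := by
  have htail (k : ℕ) : 1 - a * q ^ n * q ^ k = 1 - a * q ^ (k + n) := by ring
  have hmul := multipliable_one_sub_mul_pow hq (a * q ^ n)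
  simp only [htail] at hmul
  simp only [qPochInf, qPoch, htail]
  exact (Multipliable.prod_mul_tprod_nat_mul' (f := fun k => 1 - a * q ^ k) hmul).symm

lemma qPochInf_eq_tsum_eulerCoeff (hq : ‖q‖ < 1) (y : ℂ) :
    qPochInf y q = ∑' m, eulerCoeff q m * y ^ m := by
  have hlim := (multipliable_one_sub_mul_pow hq y).tendsto_prod_tprod_nat.mul
    (tendsto_tsum_eulerCoeff_mul_pow hq y)
  rw [mul_one] at hlim
  exact tendsto_nhds_unique hlim
    (tendsto_const_nhds.congr (tsum_eulerCoeff_mul_pow_eq_qPoch_mul hq y))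

lemma tsum_mul_qPochInf_mul_pow (hq : ‖q‖ < 1) {f : ℕ → ℂ} (hf : Summable fun n => ‖f n‖)
    (x : ℂ) :
    ∑' n, f n * qPochInf (x * q ^ n) q =
      ∑' N, ∑ p ∈ antidiagonal N, f p.1 * (eulerCoeff q p.2 * (x * q ^ p.1) ^ p.2) := by
  have hsum : Summable fun p : ℕ × ℕ => f p.1 * (eulerCoeff q p.2 * (x * q ^ p.1) ^ p.2) := by
    refine .of_norm_bounded (hf.mul_norm (summable_norm_eulerCoeff_mul_pow hq x)) fun p => ?_
    rw [norm_mul, norm_mul (f p.1)]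
    exact mul_le_mul_of_nonneg_left (norm_eulerCoeff_mul_pow_le hq x _ _) (norm_nonneg _)
  simp only [qPochInf_eq_tsum_eulerCoeff hq, ← tsum_mul_left]
  exact tsum_tsum_eq_tsum_sum_antidiagonal hsum

end InfiniteProducts

theorem stmt18 (q : ℂ) (hq0 : 0 < ‖q‖) (hq1 : ‖q‖ < 1)
    (a₁ a₂ b₁ x : ℂ) (ha₁ : a₁ ≠ 0) (ha₂ : a₂ ≠ 0) (hb₁ : b₁ ≠ 0)
    (ha₁q : ∀ m : ℕ, 1 ≤ m → a₁ ≠ q ^ m) (ha₂q : ∀ m : ℕ, 1 ≤ m → a₂ ≠ q ^ m)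
    (hb₁a₁ : ∀ m : ℤ, b₁ / a₁ ≠ q ^ m)
    (hx : ∀ m : ℕ, x ≠ q ^ (-(m : ℤ)))
    (h1 : Summable (fun n : ℕ => ‖(q ^ (n ^ 2) * qPoch (a₁ * q / b₁) q n /
        (qPoch q q n * qPoch (q / a₁) q n * qPoch (q / a₂) q n)) * (x / a₁) ^ n *
      ∑ k ∈ Finset.range (n + 1),
        qPoch (q ^ (-(n : ℤ))) q k * qPoch (a₂ * q ^ (-(n : ℤ))) q k * (b₁ / a₂) ^ k /
          (qPoch q q k * qPoch (b₁ * q ^ (-(n : ℤ)) / a₁) q k)‖))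
    (h2 : Summable (fun n : ℕ => ‖(-1 : ℂ) ^ n * q ^ (3 * (n * (n - 1) / 2)) *
      qPoch (b₁ / (a₁ * a₂)) q n * (x * q ^ 2 / b₁) ^ n /
      (qPoch q q n * qPoch x q n * qPoch (q / a₁) q n * qPoch (q / a₂) q n)‖)) :
    ∑' n : ℕ, (q ^ (n ^ 2) * qPoch (a₁ * q / b₁) q n /
        (qPoch q q n * qPoch (q / a₁) q n * qPoch (q / a₂) q n)) * (x / a₁) ^ n *
      ∑ k ∈ Finset.range (n + 1),
        qPoch (q ^ (-(n : ℤ))) q k * qPoch (a₂ * q ^ (-(n : ℤ))) q k * (b₁ / a₂) ^ k /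
          (qPoch q q k * qPoch (b₁ * q ^ (-(n : ℤ)) / a₁) q k)
    = qPochInf x q * ∑' n : ℕ, (-1 : ℂ) ^ n * q ^ (3 * (n * (n - 1) / 2)) *
      qPoch (b₁ / (a₁ * a₂)) q n * (x * q ^ 2 / b₁) ^ n /
      (qPoch q q n * qPoch x q n * qPoch (q / a₁) q n * qPoch (q / a₂) q n) := by
  have hq0' : q ≠ 0 := norm_pos_iff.mp hq0
  have hu := qPoch_div_ne_zero ha₁ ha₁q
  have hv := qPoch_div_ne_zero ha₂ ha₂q
  have hw (n : ℕ) : qPoch (a₁ * q / b₁) q n ≠ 0 := by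
    rw [mul_comm, ← div_div_eq_mul_div]
    exact qPoch_div_ne_zero (div_ne_zero hb₁ ha₁) (fun m _ => mod_cast hb₁a₁ m) n
  have hxn : ∀ n, qPoch x q n ≠ 0 := qPoch_ne_zero fun k hk =>
    hx k (by rw [zpow_neg, zpow_natCast]; exact eq_inv_of_mul_eq_one_left hk)
  rw [← tsum_mul_left,
    tsum_congr (terminating_sum_mul_pow_eq_sum_antidiagonal hq0' (qPoch_self_ne_zero hq1)
      ha₁ ha₂ hb₁ hu hv hw x),
    ← tsum_mul_qPochInf_mul_pow hq1 (summable_norm_phiOneThreeCoeff hq1 _ _ _ _)]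
  refine tsum_congr fun n => ?_
  have := hxn n
  rw [qPochInf_eq_qPoch_mul_qPochInf hq1 x n, phiOneThreeCoeff, Nat.choose_two_right]
  field_simp
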